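/- arXiv:2307.08497 — 4 statements merged into one kernel-verified Lean document; each statement's English description precedes it below -/
import Mathlib

section
/- Let U be a set of vertices of a graph G, and suppose there exist u ∈ U and k ∈ ℕ such that dist_G(u, u') ≤ 2k for all u' ∈ U. Then the induced subgraph G[B_G(U, k)] has radius at most 3k; in particular, G[B_G(U, k)] is connected. -/
open SimpleGraph

namespace RadialPaper

variable {V W N : Type*}

/-- The ball of radius `r` around a set `U` of vertices of `G`. -/
def ballSet (G : SimpleGraph V) (U : Set V) (r : ℕ) : Set V :=
  {v | ∃ u ∈ U, G.edist u v ≤ (r : ℕ∞)}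

/-- `G` has radius at most `r`: some vertex has distance at most `r` from every vertex.
The empty graph has radius `0`; a nonempty disconnected graph has radius `∞`, hence
satisfies `radiusLE` for no `r`. -/
def radiusLE (G : SimpleGraph V) (r : ℕ) : Prop :=
  Nonempty V → ∃ v : V, ∀ w : V, G.edist v w ≤ (r : ℕ∞)

/-- `(Hg, B)` is a graph-decomposition of `G` modelled on `Hg`. -/
def IsGraphDecomp (G : SimpleGraph V) (Hg : SimpleGraph N) (B : N → Set V) : Prop :=
  (∀ v : V, ∃ h : N, v ∈ B h) ∧
  (∀ ⦃u v : V⦄, G.Adj u v → ∃ h : N, u ∈ B h ∧ v ∈ B h) ∧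
  (∀ v : V, (Hg.induce {h : N | v ∈ B h}).Connected)

/-- A subgraph `X` of `G` is `c`-quasi-geodesic. -/
def IsQuasiGeodesic (G : SimpleGraph V) (X : G.Subgraph) (c : ℕ) : Prop :=
  ∀ u v : X.verts, X.coe.edist u v ≤ (c : ℕ∞) * G.edist (u : V) (v : V)

/-- The subgraph `Y` of `G` is a `(≥ k)`-subdivision of the graph `X`. -/
def IsSubdivGE (k : ℕ) (X : SimpleGraph W) {G : SimpleGraph V} (Y : G.Subgraph) : Prop :=
  ∃ (f : W → V) (p : ∀ ⦃u v : W⦄, X.Adj u v → G.Walk (f u) (f v)),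
    Function.Injective f ∧
    (∀ ⦃u v : W⦄ (h : X.Adj u v), (p h).IsPath) ∧
    (∀ ⦃u v : W⦄ (h : X.Adj u v), k + 1 ≤ (p h).length) ∧
    (∀ ⦃u v : W⦄ (h : X.Adj u v), p h.symm = (p h).reverse) ∧
    (∀ ⦃u v : W⦄ (h : X.Adj u v) (w : W), f w ∈ (p h).support → w = u ∨ w = v) ∧
    (∀ ⦃u v u' v' : W⦄ (h : X.Adj u v) (h' : X.Adj u' v'), s(u, v) ≠ s(u', v') →
      ∀ x : V, x ∈ (p h).support → x ∈ (p h').support →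
        (x = f u ∨ x = f v) ∧ (x = f u' ∨ x = f v')) ∧
    Y.verts = Set.range f ∪ {x : V | ∃ (u v : W) (h : X.Adj u v), x ∈ (p h).support} ∧
    Y.edgeSet = {e : Sym2 V | ∃ (u v : W) (h : X.Adj u v), e ∈ (p h).edges}

/-- `G` contains a `(≥ k)`-subdivision of `X` as a `c`-quasi-geodesic subgraph. -/
def ContainsQuasiGeodesicSubdivGE (G : SimpleGraph V) (k : ℕ) (X : SimpleGraph W) (c : ℕ) :
    Prop :=
  ∃ Y : G.Subgraph, IsSubdivGE k X Y ∧ IsQuasiGeodesic G Y c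

/-- `X` is a minor of `Hg`. -/
def IsMinorOf (X : SimpleGraph W) (Hg : SimpleGraph N) : Prop :=
  ∃ B : W → Set N, (∀ w, (B w).Nonempty) ∧ (∀ w, (Hg.induce (B w)).Connected) ∧
    (∀ ⦃w w' : W⦄, w ≠ w' → Disjoint (B w) (B w')) ∧
    (∀ ⦃w w' : W⦄, X.Adj w w' → ∃ a ∈ B w, ∃ b ∈ B w', Hg.Adj a b)

/-- A class of (finite) graphs, given on the canonical vertex sets `Fin n`, is minor-closed. -/
def MinorClosed (ℋ : ∀ n : ℕ, SimpleGraph (Fin n) → Prop) : Prop :=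
  ∀ ⦃m n : ℕ⦄ (X : SimpleGraph (Fin m)) (Hg : SimpleGraph (Fin n)),
    ℋ n Hg → IsMinorOf X Hg → ℋ m X

/-- The triangle `K³`. -/
def triangleGraph : SimpleGraph (Fin 3) := ⊤

/-- The claw `K_{1,3}`, with centre `0`. -/
def clawGraph : SimpleGraph (Fin 4) := SimpleGraph.fromRel (fun a _ => a = 0)

/-- The wrench graph: two adjacent vertices `0, 1` of degree three, with leaves `2,3` and
`4,5` respectively. -/
def wrenchGraph : SimpleGraph (Fin 6) :=
  SimpleGraph.fromRel (fun a b =>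
    (a = 0 ∧ b = 1) ∨ (a = 0 ∧ b = 2) ∨ (a = 0 ∧ b = 3) ∨ (a = 1 ∧ b = 4) ∨ (a = 1 ∧ b = 5))

/-- The star `K_{1,m}`, with centre `none`. -/
def starGraph (m : ℕ) : SimpleGraph (Option (Fin m)) :=
  SimpleGraph.fromRel (fun a _ => a = none)

/-- `Hg` is a disjoint union of paths: every connected component is a path. -/
def IsUnionOfPaths (Hg : SimpleGraph N) : Prop :=
  ∀ cc : Hg.ConnectedComponent, ∃ m : ℕ,
    Nonempty (Hg.induce cc.supp ≃g SimpleGraph.pathGraph m)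

/-- `Hg` is a disjoint union of cycles: every connected component is a cycle. -/
def IsUnionOfCycles (Hg : SimpleGraph N) : Prop :=
  ∀ cc : Hg.ConnectedComponent, ∃ m : ℕ, 3 ≤ m ∧
    Nonempty (Hg.induce cc.supp ≃g SimpleGraph.cycleGraph m)

/-- `Hg` is a subdivided star, i.e. a `(≥ 0)`-subdivision of some star `K_{1,m}`. -/
def IsSubdividedStar (Hg : SimpleGraph N) : Prop :=
  ∃ m : ℕ, IsSubdivGE 0 (starGraph m) (⊤ : Hg.Subgraph)

/-- `Hg` is a disjoint union of subdivided stars. -/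
def IsUnionOfSubdividedStars (Hg : SimpleGraph N) : Prop :=
  ∀ cc : Hg.ConnectedComponent, IsSubdividedStar (Hg.induce cc.supp)

/-- A graph-decomposition is honest: bags of adjacent nodes intersect. -/
def Honest (Hg : SimpleGraph N) (B : N → Set V) : Prop :=
  ∀ ⦃h h' : N⦄, Hg.Adj h h' → (B h ∩ B h').Nonempty

/-- The outer-radial width of a decomposition of `G` is at most `r`. -/
def OuterRadialWidthLE (G : SimpleGraph V) (B : N → Set V) (r : ℕ) : Prop :=
  ∀ h : N, ∃ z : V, ∀ v ∈ B h, G.edist z v ≤ (r : ℕ∞)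

/-- The radial spread of a decomposition `(Hg, B)` of a graph with vertex set `V`
is at most `r`. -/
def RadialSpreadLE (Hg : SimpleGraph N) (B : N → Set V) (r : ℕ) : Prop :=
  ∀ v : V, radiusLE (Hg.induce {h : N | v ∈ B h}) r

/-- `φ` is an `(m, a, M, A, r)`-quasi-isometry from `Hg` to `G`. -/
def IsQuasiIsometry (Hg : SimpleGraph N) (G : SimpleGraph V) (m a M A r : ℕ)
    (φ : N → V) : Prop :=
  (∀ h h' : N, Hg.edist h h' ≤ (m : ℕ∞) * G.edist (φ h) (φ h') + (a : ℕ∞)) ∧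
  (∀ h h' : N, G.edist (φ h) (φ h') ≤ (M : ℕ∞) * Hg.edist h h' + (A : ℕ∞)) ∧
  (∀ v : V, ∃ h : N, G.edist v (φ h) ≤ (r : ℕ∞))

/-- `C` is a connected component of `G - S`: a maximal connected set of vertices
disjoint from `S`. -/
def IsCompOf (G : SimpleGraph V) (C S : Set V) : Prop :=
  C.Nonempty ∧ Disjoint C S ∧ (G.induce C).Connected ∧
  ∀ D : Set V, C ⊆ D → Disjoint D S → (G.induce D).Connected → D = C

/-- The subgraph `P` of `G` is an `M₀`–`M₁` path meeting `C`. -/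
def IsM01Path (G : SimpleGraph V) (M₀ M₁ C : Set V) (P : G.Subgraph) : Prop :=
  ∃ (x y : V) (q : G.Walk x y), q.IsPath ∧ q.toSubgraph = P ∧ x ∈ M₀ ∧ y ∈ M₁ ∧
    (∀ z ∈ q.support, z ≠ x → z ≠ y → z ∉ M₀ ∪ M₁) ∧ ∃ z ∈ q.support, z ∈ C

/-- The number of `M₀`–`M₁` paths meeting `C` that are contained in the subgraph `OS`. -/
noncomputable def Wcount (G : SimpleGraph V) (M₀ M₁ C : Set V) (OS : G.Subgraph) : ℕ :=
  Set.ncard {P : G.Subgraph | P ≤ OS ∧ IsM01Path G M₀ M₁ C P}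

/-!
Every vertex on a geodesic of length at most `2 * k + 1` between two points of `U` is within
distance `k` of one of its ends, so the geodesics from `u` to the other points of `U` stay in
`ballSet G U k`; so does a geodesic from a point `u'` of `U` to a vertex within distance `k` of
`u'`. Hence both keep their lengths in the induced subgraph, and concatenating them reaches every
vertex of the ball from `u`.
-/

section GeodesicInterval

variable {G : SimpleGraph V}

lemma walk_length_induce {s : Set V} {u v : V} (p : G.Walk u v) (hp : ∀ x ∈ p.support, x ∈ s) :
    (p.induce s hp).length = p.length :=
  (Walk.length_map _ _).symm.trans (congrArg Walk.length (Walk.map_induce p hp))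

lemma edist_add_edist_le_length_of_mem_support {u v x : V} {p : G.Walk u v}
    (hx : x ∈ p.support) : G.edist u x + G.edist x v ≤ p.length := by
  obtain ⟨q, r, rfl⟩ := Walk.mem_support_iff_exists_append.mp hx
  rw [Walk.length_append, Nat.cast_add]
  exact add_le_add (edist_le q) (edist_le r)

lemma edist_induce_le_edist {s : Set V} {u v : s}
    (hs : ∀ x, G.edist u x + G.edist x v = G.edist u v → x ∈ s) :
    (G.induce s).edist u v ≤ G.edist u v := by
  obtain htop | hfin := eq_or_ne (G.edist (u : V) v) ⊤
  · exact htop ▸ le_top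
  obtain ⟨p, hp⟩ := exists_walk_of_edist_ne_top hfin
  have hps : ∀ x ∈ p.support, x ∈ s := fun x hx ↦
    hs x <| (hp ▸ edist_add_edist_le_length_of_mem_support hx).antisymm SimpleGraph.edist_triangle
  calc (G.induce s).edist u v ≤ (p.induce s hps).length := edist_le _
    _ = G.edist u v := by rw [walk_length_induce, hp]

end GeodesicInterval

lemma radiusLE.connected {G : SimpleGraph V} [Nonempty V] {r : ℕ} (h : radiusLE G r) :
    G.Connected := by
  obtain ⟨v, hv⟩ := h ‹_›
  refine (connected_iff_exists_forall_reachable G).mpr ⟨v, fun w ↦ ?_⟩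
  exact reachable_of_edist_ne_top (ne_top_of_le_ne_top (ENat.natCast_ne_top r) (hv w))

section BallSet

variable {G : SimpleGraph V} {U : Set V} {u v x : V} {d k : ℕ}

lemma subset_ballSet : U ⊆ ballSet G U k :=
  fun u hu ↦ ⟨u, hu, by simp⟩

lemma mem_ballSet_of_edist_add_edist_le (hu : u ∈ U) (hv : v ∈ U)
    (hx : G.edist u x + G.edist x v ≤ (2 * k + 1 : ℕ)) : x ∈ ballSet G U k := by
  by_contra hxU
  have hux : (k + 1 : ℕ) ≤ G.edist u x :=
    Order.add_one_le_of_lt <| not_le.mp fun h ↦ hxU ⟨u, hu, h⟩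
  have hxv : (k + 1 : ℕ) ≤ G.edist x v :=
    Order.add_one_le_of_lt <| not_le.mp fun h ↦ hxU ⟨v, hv, SimpleGraph.edist_comm ▸ h⟩
  have : k + 1 + (k + 1) ≤ 2 * k + 1 := by exact_mod_cast (add_le_add hux hxv).trans hx
  lia

lemma edist_induce_ballSet_le_of_mem (hu : u ∈ U) (hv : v ∈ U)
    (huv : G.edist u v ≤ (2 * k + 1 : ℕ)) :
    (G.induce (ballSet G U k)).edist ⟨u, subset_ballSet hu⟩ ⟨v, subset_ballSet hv⟩ ≤
      G.edist u v :=
  edist_induce_le_edist fun _ hx ↦ mem_ballSet_of_edist_add_edist_le hu hv (hx.trans_le huv)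

lemma edist_induce_ballSet_le_of_edist_le (hu : u ∈ U) (huv : G.edist u v ≤ k) :
    (G.induce (ballSet G U k)).edist ⟨u, subset_ballSet hu⟩ ⟨v, u, hu, huv⟩ ≤ G.edist u v :=
  edist_induce_le_edist fun _ hx ↦ ⟨u, hu, (le_self_add.trans_eq hx).trans huv⟩

lemma edist_induce_ballSet_le_add (hu : u ∈ U) (hd : d ≤ 2 * k + 1)
    (hdist : ∀ u' ∈ U, G.edist u u' ≤ d) (w : ballSet G U k) :
    (G.induce (ballSet G U k)).edist ⟨u, subset_ballSet hu⟩ w ≤ (d + k : ℕ) := by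
  obtain ⟨v, u', hu', hv⟩ := w
  have huu' : G.edist u u' ≤ (2 * k + 1 : ℕ) := (hdist u' hu').trans (mod_cast hd)
  calc (G.induce (ballSet G U k)).edist ⟨u, subset_ballSet hu⟩ ⟨v, u', hu', hv⟩
    _ ≤ (G.induce (ballSet G U k)).edist ⟨u, subset_ballSet hu⟩ ⟨u', subset_ballSet hu'⟩ +
          (G.induce (ballSet G U k)).edist ⟨u', subset_ballSet hu'⟩ ⟨v, u', hu', hv⟩ :=
        SimpleGraph.edist_triangle
    _ ≤ G.edist u u' + G.edist u' v :=
        add_le_add (edist_induce_ballSet_le_of_mem hu hu' huu')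
          (edist_induce_ballSet_le_of_edist_le hu' hv)
    _ ≤ (d + k : ℕ) := by
        rw [Nat.cast_add]
        exact add_le_add (hdist u' hu') hv

theorem radius_of_ball_around_set_general (hu : u ∈ U) (hd : d ≤ 2 * k + 1)
    (hdist : ∀ u' ∈ U, G.edist u u' ≤ d) :
    radiusLE (G.induce (ballSet G U k)) (d + k) ∧ (G.induce (ballSet G U k)).Connected := by
  have hradius : radiusLE (G.induce (ballSet G U k)) (d + k) :=
    fun _ ↦ ⟨⟨u, subset_ballSet hu⟩, edist_induce_ballSet_le_add hu hd hdist⟩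
  have : Nonempty (ballSet G U k) := ⟨u, subset_ballSet hu⟩
  exact ⟨hradius, hradius.connected⟩

end BallSet

/-- Let `U` be a set of vertices of a graph `G`, and suppose there are
`u ∈ U` and `k : ℕ` with `dist_G(u, u') ≤ 2k` for all `u' ∈ U`. Then `G[B_G(U, k)]` has
radius at most `3k`; in particular it is connected. -/
theorem radius_of_ball_around_set
    {V : Type*} [Fintype V] (G : SimpleGraph V) (U : Set V) (u : V) (hu : u ∈ U) (k : ℕ)
    (hdist : ∀ u' ∈ U, G.edist u u' ≤ ((2 * k : ℕ) : ℕ∞)) :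
    radiusLE (G.induce (ballSet G U k)) (3 * k) ∧
      (G.induce (ballSet G U k)).Connected := by
  rw [show 3 * k = 2 * k + k by ring]
  exact radius_of_ball_around_set_general hu (Nat.le_succ _) hdist

end RadialPaper
end

section
/- Let (H,(V_h)_{h ∈ V(H)}) be a graph-decomposition of a graph G. Then for every connected subgraph X of G, the subgraph of H induced on the set {h ∈ V(H) : V(X) ∩ V_h ≠ ∅} is connected. -/
open SimpleGraph

namespace RadialPaper

variable {V W N : Type*}

/-!
For a vertex `v` of `X`, let `H_v` be the set of nodes whose bag contains `v`; it induces a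
connected subgraph of `Hg`. The ends of every edge `uv` of `X` lie in a common bag, so `H_u` and
`H_v` meet. Hence the union of the `H_v` along a walk of `X` is connected, and any two vertices of
`X` are joined by such a walk.
-/

section InducedUnion

variable {F : SimpleGraph V} {H : SimpleGraph N} {s : V → Set N}

theorem induce_biUnion_support_preconnected (hs : ∀ v, (H.induce (s v)).Preconnected)
    (hmeet : ∀ ⦃u v⦄, F.Adj u v → (s u ∩ s v).Nonempty) {u v : V} (p : F.Walk u v) :
    (H.induce (⋃ w ∈ p.support, s w)).Preconnected := by
  induction p with
  | @nil u =>
    have hunion : ⋃ w ∈ (Walk.nil : F.Walk u u).support, s w = s u := by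
      simp only [Walk.support_nil, List.mem_singleton, Set.iUnion_iUnion_eq_left]
    rw [hunion]
    exact hs u
  | @cons u v _ huv p ih =>
    have hunion : ⋃ w ∈ (Walk.cons huv p).support, s w = s u ∪ ⋃ w ∈ p.support, s w := by
      simp only [Walk.support_cons, List.mem_cons, Set.iUnion_iUnion_eq_or_left]
    have hinter : (s u ∩ ⋃ w ∈ p.support, s w).Nonempty :=
      (hmeet huv).mono <| Set.inter_subset_inter_right _ <|
        Set.subset_biUnion_of_mem (u := s) p.start_mem_support
    rw [hunion]
    exact (induce_union_connected (hs u) ih hinter).preconnected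

theorem induce_iUnion_preconnected (hF : F.Preconnected)
    (hs : ∀ v, (H.induce (s v)).Preconnected)
    (hmeet : ∀ ⦃u v⦄, F.Adj u v → (s u ∩ s v).Nonempty) :
    (H.induce (⋃ v, s v)).Preconnected := by
  rintro ⟨a, ha⟩ ⟨b, hb⟩
  obtain ⟨u, hau⟩ := Set.mem_iUnion.mp ha
  obtain ⟨v, hbv⟩ := Set.mem_iUnion.mp hb
  obtain ⟨p⟩ := hF u v
  have hsub : ⋃ w ∈ p.support, s w ⊆ ⋃ w, s w := Set.iUnion₂_subset_iUnion _ _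
  have hreach := induce_biUnion_support_preconnected hs hmeet p
    ⟨a, Set.mem_biUnion p.start_mem_support hau⟩ ⟨b, Set.mem_biUnion p.end_mem_support hbv⟩
  exact hreach.map (induceHomOfLE H hsub).toHom

theorem induce_iUnion_connected (hF : F.Connected) (hs : ∀ v, (H.induce (s v)).Connected)
    (hmeet : ∀ ⦃u v⦄, F.Adj u v → (s u ∩ s v).Nonempty) :
    (H.induce (⋃ v, s v)).Connected where
  preconnected :=
    induce_iUnion_preconnected hF.preconnected (fun v => (hs v).preconnected) hmeet
  nonempty := by
    obtain ⟨v⟩ := hF.nonempty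
    obtain ⟨a, ha⟩ := (hs v).nonempty
    exact ⟨a, Set.mem_iUnion_of_mem v ha⟩

end InducedUnion

theorem induced_on_bags_meeting_connected_subgraph_connected_general
    {G : SimpleGraph V} {Hg : SimpleGraph N} {B : N → Set V} (hdec : IsGraphDecomp G Hg B)
    {X : G.Subgraph} (hX : X.coe.Connected) :
    (Hg.induce {h : N | ∃ v ∈ X.verts, v ∈ B h}).Connected := by
  obtain ⟨-, hedge, hnodes⟩ := hdec
  have hunion : {h : N | ∃ v ∈ X.verts, v ∈ B h} = ⋃ v : X.verts, {h : N | ↑v ∈ B h} := by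
    ext h
    simp only [Set.mem_ofPred_eq, Set.mem_iUnion, Subtype.exists, exists_prop]
  rw [hunion]
  exact induce_iUnion_connected hX (fun v => hnodes v) fun _ _ huv => hedge (X.coe_adj_sub _ _ huv)

/-- Let `(Hg, B)` be a graph-decomposition of `G`. Then for every
connected subgraph `X` of `G`, the subgraph of `Hg` induced on the nodes whose bags meet
`X` is connected. -/
theorem induced_on_bags_meeting_connected_subgraph_connected
    {V N : Type*} [Fintype V] [Fintype N] (G : SimpleGraph V) (Hg : SimpleGraph N)
    (B : N → Set V) (hdec : IsGraphDecomp G Hg B)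
    (X : G.Subgraph) (hX : X.coe.Connected) :
    (Hg.induce {h : N | ∃ v ∈ X.verts, v ∈ B h}).Connected :=
  induced_on_bags_meeting_connected_subgraph_connected_general hdec hX

end RadialPaper
end

section
/- Let (H,(V_h)_{h ∈ V(H)}) be a graph-decomposition of a graph G, and suppose that H is a minor of a graph H'. Then G has an H'-decomposition whose radial width equals the radial width of (H,(V_h)). -/
open SimpleGraph

namespace RadialPaper

variable {V W N : Type*}

/-!
Replace every node `h` of `Hg` by its branch set in `Hg'`, giving each node of the branch set the
bag of `h`; nodes outside all branch sets get the empty bag. The nodes whose bag contains a given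
vertex `v` then form the union of the branch sets of a connected subgraph of `Hg`, which is
connected because adjacent nodes of `Hg` have adjacent branch sets. Up to empty bags, which have
radius `0`, both decompositions have the same bags and hence the same radial width.
-/

section Connectivity

variable {X : SimpleGraph W} {H : SimpleGraph N} {M : W → Set N}

theorem reachable_induce_iUnion (hM : ∀ w, (H.induce (M w)).Preconnected)
    (hadj : ∀ ⦃w w'⦄, X.Adj w w' → ∃ a ∈ M w, ∃ b ∈ M w', H.Adj a b)
    {x y : W} (hxy : X.Reachable x y) {a b : N} (ha : a ∈ M x) (hb : b ∈ M y) :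
    (H.induce (⋃ w, M w)).Reachable
      ⟨a, Set.mem_iUnion_of_mem x ha⟩ ⟨b, Set.mem_iUnion_of_mem y hb⟩ := by
  have reachable_within (w : W) {c d : N} (hc : c ∈ M w) (hd : d ∈ M w) :
      (H.induce (⋃ w, M w)).Reachable
        ⟨c, Set.mem_iUnion_of_mem w hc⟩ ⟨d, Set.mem_iUnion_of_mem w hd⟩ :=
    (hM w ⟨c, hc⟩ ⟨d, hd⟩).map (induceHomOfLE H (Set.subset_iUnion M w)).toHom
  obtain ⟨p⟩ := hxy
  induction p generalizing a with
  | nil => exact reachable_within _ ha hb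
  | @cons x z _ hxz _ ih =>
    obtain ⟨c, hc, d, hd, hcd⟩ := hadj hxz
    have crossing : (H.induce (⋃ w, M w)).Adj
        ⟨c, Set.mem_iUnion_of_mem x hc⟩ ⟨d, Set.mem_iUnion_of_mem z hd⟩ := hcd
    exact (reachable_within x ha hc).trans (crossing.reachable.trans (ih hd hb))

theorem connected_induce_iUnion (hX : X.Connected) (hM : ∀ w, (H.induce (M w)).Connected)
    (hadj : ∀ ⦃w w'⦄, X.Adj w w' → ∃ a ∈ M w, ∃ b ∈ M w', H.Adj a b) :
    (H.induce (⋃ w, M w)).Connected := by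
  obtain ⟨w⟩ := hX.nonempty
  obtain ⟨a, ha⟩ := (hM w).nonempty
  refine (connected_iff _).mpr ⟨?_, ⟨a, Set.mem_iUnion_of_mem w ha⟩⟩
  rintro ⟨b, hb⟩ ⟨c, hc⟩
  obtain ⟨x, hx⟩ := Set.mem_iUnion.mp hb
  obtain ⟨y, hy⟩ := Set.mem_iUnion.mp hc
  exact reachable_induce_iUnion (fun w ↦ (hM w).preconnected) hadj (hX.preconnected x y) hx hy

end Connectivity

section LiftBags

open scoped Function

variable {M : W → Set N} {B : W → Set V}

/-- The bags on `N` obtained by spreading each bag `B w` over the whole branch set `M w`.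
Overlapping branch sets contribute the union of their bags, and a node in no branch set gets the
empty bag. -/
def liftBags (M : W → Set N) (B : W → Set V) (n : N) : Set V :=
  {v | ∃ w, n ∈ M w ∧ v ∈ B w}

theorem setOf_mem_liftBags (v : V) :
    {n | v ∈ liftBags M B n} = ⋃ w : {w | v ∈ B w}, M w := by
  ext n
  simp [liftBags, and_comm]

theorem liftBags_eq_of_mem (hdisj : Pairwise (Disjoint on M)) {w : W} {n : N} (hn : n ∈ M w) :
    liftBags M B n = B w := by
  refine Set.Subset.antisymm ?_ fun v hv ↦ ⟨w, hn, hv⟩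
  rintro v ⟨w', hn', hv⟩
  rwa [hdisj.eq (Set.not_disjoint_iff.mpr ⟨n, hn, hn'⟩)]

theorem liftBags_eq_empty {n : N} (hn : ∀ w, n ∉ M w) : liftBags M B n = ∅ :=
  Set.eq_empty_of_forall_notMem fun _ ⟨w, hw, _⟩ ↦ hn w hw

theorem forall_liftBags_iff {P : Set V → Prop} (hP : P ∅) (hne : ∀ w, (M w).Nonempty)
    (hdisj : Pairwise (Disjoint on M)) :
    (∀ n, P (liftBags M B n)) ↔ ∀ w, P (B w) := by
  constructor
  · intro h w
    obtain ⟨n, hn⟩ := hne w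
    rw [← liftBags_eq_of_mem (B := B) hdisj hn]
    exact h n
  · intro h n
    by_cases hn : ∃ w, n ∈ M w
    · obtain ⟨w, hw⟩ := hn
      rw [liftBags_eq_of_mem hdisj hw]
      exact h w
    · rw [liftBags_eq_empty (not_exists.mp hn)]
      exact hP

theorem IsGraphDecomp.liftBags {G : SimpleGraph V} {X : SimpleGraph W} {H : SimpleGraph N}
    (hB : IsGraphDecomp G X B) (hM : ∀ w, (H.induce (M w)).Connected)
    (hadj : ∀ ⦃w w'⦄, X.Adj w w' → ∃ a ∈ M w, ∃ b ∈ M w', H.Adj a b) :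
    IsGraphDecomp G H (liftBags M B) := by
  obtain ⟨hvert, hedge, hconn⟩ := hB
  refine ⟨fun v ↦ ?_, fun u v huv ↦ ?_, fun v ↦ ?_⟩
  · obtain ⟨w, hv⟩ := hvert v
    obtain ⟨n, hn⟩ := (hM w).nonempty
    exact ⟨n, w, hn, hv⟩
  · obtain ⟨w, hu, hv⟩ := hedge huv
    obtain ⟨n, hn⟩ := (hM w).nonempty
    exact ⟨n, ⟨w, hn, hu⟩, ⟨w, hn, hv⟩⟩
  · rw [setOf_mem_liftBags]
    exact connected_induce_iUnion (hconn v) (fun w ↦ hM w) fun _ _ h ↦ hadj h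

end LiftBags

theorem radiusLE_of_isEmpty [IsEmpty V] (G : SimpleGraph V) (r : ℕ) : radiusLE G r :=
  fun h ↦ isEmptyElim h.some

theorem decomposition_modelled_on_minor_host_general {N' : Type*} (G : SimpleGraph V)
    (Hg : SimpleGraph N) (Hg' : SimpleGraph N') (B : N → Set V)
    (hdec : IsGraphDecomp G Hg B) (hminor : IsMinorOf Hg Hg') :
    ∃ B' : N' → Set V, IsGraphDecomp G Hg' B' ∧
      ∀ r : ℕ, ((∀ h', radiusLE (G.induce (B' h')) r) ↔
        (∀ h, radiusLE (G.induce (B h)) r)) := by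
  obtain ⟨M, hne, hconn, hdisj, hadj⟩ := hminor
  refine ⟨liftBags M B, hdec.liftBags hconn hadj, fun r ↦ ?_⟩
  exact forall_liftBags_iff (P := fun S ↦ radiusLE (G.induce S) r)
    (radiusLE_of_isEmpty _ r) hne hdisj

/-- Let `(Hg, B)` be a graph-decomposition of `G`, and suppose `Hg` is a
minor of `Hg'`. Then `G` has an `Hg'`-decomposition whose radial width equals the radial
width of `(Hg, B)` (equality of the two widths in `ℕ∞` is expressed by their having the
same natural upper bounds). -/
theorem decomposition_modelled_on_minor_host
    {V N N' : Type*} [Fintype V] [Fintype N] [Fintype N'] (G : SimpleGraph V)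
    (Hg : SimpleGraph N) (Hg' : SimpleGraph N') (B : N → Set V)
    (hdec : IsGraphDecomp G Hg B) (hminor : IsMinorOf Hg Hg') :
    ∃ B' : N' → Set V, IsGraphDecomp G Hg' B' ∧
      ∀ r : ℕ, ((∀ h', radiusLE (G.induce (B' h')) r) ↔
        (∀ h, radiusLE (G.induce (B h)) r)) := by
  exact decomposition_modelled_on_minor_host_general G Hg Hg' B hdec hminor

end RadialPaper
end

section
/- Let G be a graph, let X be a c-quasi-geodesic subgraph of G for some c ∈ ℕ, and let v be a vertex of G. If P is a shortest v–X path in G (a path of minimum length in G from v to a vertex of X), then the subgraph X ∪ P is (2c+1)-quasi-geodesic in G. -/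
open SimpleGraph

namespace RadialPaper

variable {V W N : Type*}

/-!
A shortest path `P` from `v` to `X`, ending in `x`, is itself `1`-quasi-geodesic, so only distances
between a vertex `a` of `X` and a vertex `b` of `P` need care. Since `x` is nearest to `v` among the
vertices of `X`, it is also nearest to `b`. On the detour from `a` to `b` through `x`, the second
leg therefore has length at most `dist a b`, while the ends of the first leg have distance at most
`dist a b + dist b x ≤ 2 * dist a b` in `G`, which `X` stretches by a factor of at most `c`.
-/

section

variable {G : SimpleGraph V} {X Y : G.Subgraph} {c d : ℕ}

theorem edist_hom_le {H : SimpleGraph W} (f : G →g H) (u v : V) :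
    H.edist (f u) (f v) ≤ G.edist u v :=
  le_iInf fun p ↦ by simpa only [Walk.length_map] using (p.map f).edist_le

theorem coe_edist_le_of_le (h : X ≤ Y) (u v : X.verts) :
    Y.coe.edist ⟨u, h.1 u.2⟩ ⟨v, h.1 v.2⟩ ≤ X.coe.edist u v :=
  edist_hom_le (Subgraph.inclusion h) u v

theorem toSubgraph_le_of_isSubwalk {u v u' v' : V} {p : G.Walk u v} {q : G.Walk u' v'}
    (h : p.IsSubwalk q) : p.toSubgraph ≤ q.toSubgraph := by
  obtain ⟨r, s, rfl⟩ := h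
  rw [Walk.toSubgraph_append, Walk.toSubgraph_append]
  exact le_sup_of_le_left le_sup_right

theorem exists_isSubwalk_or_of_mem_support {u v a b : V} {p : G.Walk u v}
    (ha : a ∈ p.support) (hb : b ∈ p.support) :
    (∃ q : G.Walk a b, q.IsSubwalk p) ∨ ∃ q : G.Walk b a, q.IsSubwalk p := by
  classical
  have hb' := hb
  rw [← p.take_spec ha, Walk.mem_support_append_iff] at hb'
  rcases hb' with hb' | hb'
  · exact .inr ⟨_, (Walk.isSubwalk_dropUntil _ hb').trans (p.isSubwalk_takeUntil ha)⟩
  · exact .inl ⟨_, (Walk.isSubwalk_takeUntil _ hb').trans (p.isSubwalk_dropUntil ha)⟩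

theorem coe_edist_toSubgraph_le_of_isSubwalk {u v a b : V} {p : G.Walk u v} {q : G.Walk a b}
    (h : q.IsSubwalk p) (ha : a ∈ p.toSubgraph.verts) (hb : b ∈ p.toSubgraph.verts) :
    p.toSubgraph.coe.edist ⟨a, ha⟩ ⟨b, hb⟩ ≤ q.length := by
  have hlen : q.mapToSubgraph.length = q.length :=
    (Walk.length_map q.toSubgraph.hom _).symm.trans (congrArg Walk.length q.map_mapToSubgraph_hom)
  rw [← hlen]
  exact (coe_edist_le_of_le (toSubgraph_le_of_isSubwalk h) _ _).trans q.mapToSubgraph.edist_le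

theorem isQuasiGeodesic_toSubgraph_of_length_eq_dist {u v : V} {p : G.Walk u v}
    (hp : p.length = G.dist u v) : IsQuasiGeodesic G p.toSubgraph 1 := by
  have of_isSubwalk {a b : V} (ha : a ∈ p.toSubgraph.verts) (hb : b ∈ p.toSubgraph.verts)
      (q : G.Walk a b) (hq : q.IsSubwalk p) :
      p.toSubgraph.coe.edist ⟨a, ha⟩ ⟨b, hb⟩ ≤ G.edist a b :=
    calc p.toSubgraph.coe.edist ⟨a, ha⟩ ⟨b, hb⟩
        ≤ q.length := coe_edist_toSubgraph_le_of_isSubwalk hq ha hb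
      _ = G.dist a b := by rw [length_eq_dist_of_subwalk hp hq]
      _ = G.edist a b := q.reachable.coe_dist_eq_edist
  rintro ⟨a, ha⟩ ⟨b, hb⟩
  rw [Nat.cast_one, one_mul]
  rcases exists_isSubwalk_or_of_mem_support (p.mem_verts_toSubgraph.1 ha)
    (p.mem_verts_toSubgraph.1 hb) with ⟨q, hq⟩ | ⟨q, hq⟩
  · exact of_isSubwalk ha hb q hq
  · rw [edist_comm, edist_comm (u := a)]
    exact of_isSubwalk hb ha q hq

theorem edist_end_le_of_mem_support {u v a b : V} {p : G.Walk u v}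
    (hp : p.length ≤ G.edist u a) (hb : b ∈ p.support) : G.edist v b ≤ G.edist a b := by
  obtain ⟨q, r, rfl⟩ := Walk.mem_support_iff_exists_append.1 hb
  have hcancel : (q.length : ℕ∞) + r.length ≤ q.length + G.edist a b :=
    calc (q.length : ℕ∞) + r.length
        = (q.append r).length := by rw [Walk.length_append, Nat.cast_add]
      _ ≤ G.edist u a := hp
      _ ≤ G.edist u b + G.edist b a := SimpleGraph.edist_triangle
      _ ≤ q.length + G.edist a b := by rw [edist_comm (u := b)]; gcongr; exact q.edist_le
  calc G.edist v b = G.edist b v := edist_comm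
    _ ≤ r.length := r.edist_le
    _ ≤ G.edist a b := (ENat.add_le_add_iff_left (ENat.natCast_ne_top _)).1 hcancel

theorem IsQuasiGeodesic.coe_edist_le (hX : IsQuasiGeodesic G X c) (hXY : X ≤ Y) (hcd : c ≤ d)
    {a b : V} (ha : a ∈ X.verts) (hb : b ∈ X.verts) :
    Y.coe.edist ⟨a, hXY.1 ha⟩ ⟨b, hXY.1 hb⟩ ≤ d * G.edist a b :=
  calc Y.coe.edist ⟨a, hXY.1 ha⟩ ⟨b, hXY.1 hb⟩
      ≤ X.coe.edist ⟨a, ha⟩ ⟨b, hb⟩ := coe_edist_le_of_le hXY ⟨a, ha⟩ ⟨b, hb⟩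
    _ ≤ c * G.edist a b := hX ⟨a, ha⟩ ⟨b, hb⟩
    _ ≤ d * G.edist a b := by gcongr

theorem IsQuasiGeodesic.coe_sup_edist_le (hX : IsQuasiGeodesic G X c) (hY : IsQuasiGeodesic G Y d)
    {x a b : V} (hxX : x ∈ X.verts) (hxY : x ∈ Y.verts) (ha : a ∈ X.verts) (hb : b ∈ Y.verts)
    (hx : G.edist x b ≤ G.edist a b) :
    (X ⊔ Y).coe.edist ⟨a, .inl ha⟩ ⟨b, .inr hb⟩ ≤ (2 * c + d : ℕ) * G.edist a b := by
  have hax : G.edist a x ≤ G.edist a b + G.edist a b :=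
    calc G.edist a x ≤ G.edist a b + G.edist b x := SimpleGraph.edist_triangle
      _ ≤ G.edist a b + G.edist a b := by rw [edist_comm (u := b)]; gcongr
  calc (X ⊔ Y).coe.edist ⟨a, .inl ha⟩ ⟨b, .inr hb⟩
      ≤ (X ⊔ Y).coe.edist ⟨a, .inl ha⟩ ⟨x, .inl hxX⟩
          + (X ⊔ Y).coe.edist ⟨x, .inr hxY⟩ ⟨b, .inr hb⟩ := SimpleGraph.edist_triangle
    _ ≤ c * G.edist a x + d * G.edist x b :=
      add_le_add (hX.coe_edist_le le_sup_left le_rfl ha hxX)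
        (hY.coe_edist_le le_sup_right le_rfl hxY hb)
    _ ≤ c * (G.edist a b + G.edist a b) + d * G.edist a b := by gcongr
    _ = (2 * c + d : ℕ) * G.edist a b := by push_cast; ring

theorem IsQuasiGeodesic.sup (hX : IsQuasiGeodesic G X c) (hY : IsQuasiGeodesic G Y d)
    {x : V} (hxX : x ∈ X.verts) (hxY : x ∈ Y.verts)
    (hx : ∀ a ∈ X.verts, ∀ b ∈ Y.verts, G.edist x b ≤ G.edist a b) :
    IsQuasiGeodesic G (X ⊔ Y) (2 * c + d) := by
  rintro ⟨a, ha | ha⟩ ⟨b, hb | hb⟩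
  · exact hX.coe_edist_le le_sup_left (by lia) ha hb
  · exact hX.coe_sup_edist_le hY hxX hxY ha hb (hx a ha b hb)
  · rw [edist_comm, edist_comm (u := a)]
    exact hX.coe_sup_edist_le hY hxX hxY hb ha (hx b hb a ha)
  · exact hY.coe_edist_le le_sup_right (by lia) ha hb

end

theorem union_with_shortest_path_quasi_geodesic_general
    {V : Type*} (G : SimpleGraph V) (X : G.Subgraph) (c : ℕ)
    (hgeo : IsQuasiGeodesic G X c) (v : V) {x : V} (hx : x ∈ X.verts)
    (P : G.Walk v x)
    (hshort : ∀ y ∈ X.verts, ∀ Q : G.Walk v y, P.length ≤ Q.length) :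
    IsQuasiGeodesic G (X ⊔ P.toSubgraph) (2 * c + 1) := by
  have hP : P.length = G.dist v x := by
    obtain ⟨Q, hQ⟩ := P.reachable.exists_walk_length_eq_dist
    exact le_antisymm (hQ ▸ hshort x hx Q) (dist_le P)
  have hnear (a : V) (ha : a ∈ X.verts) : P.length ≤ G.edist v a :=
    le_iInf fun Q ↦ Nat.cast_le.2 (hshort a ha Q)
  exact hgeo.sup (isQuasiGeodesic_toSubgraph_of_length_eq_dist hP) hx P.end_mem_verts_toSubgraph
    fun a ha b hb ↦ edist_end_le_of_mem_support (hnear a ha) (P.mem_verts_toSubgraph.1 hb)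

/-- Let `X` be a `c`-quasi-geodesic subgraph of `G` and let `P` be a
shortest `v`–`X` path in `G`. Then `X ∪ P` is `(2c+1)`-quasi-geodesic in `G`. -/
theorem union_with_shortest_path_quasi_geodesic
    {V : Type*} [Fintype V] (G : SimpleGraph V) (X : G.Subgraph) (c : ℕ)
    (hgeo : IsQuasiGeodesic G X c) (v : V) {x : V} (hx : x ∈ X.verts)
    (P : G.Walk v x) (hP : P.IsPath)
    (hshort : ∀ y ∈ X.verts, ∀ Q : G.Walk v y, P.length ≤ Q.length) :
    IsQuasiGeodesic G (X ⊔ P.toSubgraph) (2 * c + 1) :=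
  union_with_shortest_path_quasi_geodesic_general G X c hgeo v hx P hshort

end RadialPaper
end
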